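/- Let 𝔥 > 1, set φ = 𝔥 + √(𝔥² − 1), and for a ∈ 𝔻 let u_a(x) = 2 log( 2φ(1−|a|²) / (φ²|1−āx|² − |x−a|²) ). Then for every a ∈ 𝔻: ∫_{∂𝔻} e^{u_a/2} ds = 2π/√(𝔥² − 1) and ∫_𝔻 e^{u_a} dx = 2π( 𝔥/√(𝔥² − 1) − 1 ); in particular both integrals are independent of a. -/

import Mathlib

open MeasureTheory Real Filter

noncomputable section

/-- The open unit disk in ℝ² ≅ ℂ. -/
def unitDisk : Set ℂ := Metric.ball 0 1

/-- The unit circle ∂𝔻. -/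
def unitCircle : Set ℂ := Metric.sphere 0 1

/-- The closed unit disk. -/
def closedUnitDisk : Set ℂ := Metric.closedBall 0 1

/-- Directional derivative of `u` at `x` in direction `v`. -/
def pd (u : ℂ → ℝ) (v x : ℂ) : ℝ := fderiv ℝ u x v

/-- Laplacian of `u` at `x`. -/
def lap (u : ℂ → ℝ) (x : ℂ) : ℝ :=
  fderiv ℝ (fun y => pd u 1 y) x 1 + fderiv ℝ (fun y => pd u Complex.I y) x Complex.I

/-- Squared norm of the gradient, |∇u|². -/
def gradSq (u : ℂ → ℝ) (x : ℂ) : ℝ := pd u 1 x ^ 2 + pd u Complex.I x ^ 2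

/-- Outward normal derivative ∂_ν u(x) = ∇u(x)·x at a boundary point. -/
def nderiv (u : ℂ → ℝ) (x : ℂ) : ℝ := x.re * pd u 1 x + x.im * pd u Complex.I x

/-- Tangential derivative ∂_τ u(x) = ∇u(x)·(−x₂,x₁) at a boundary point. -/
def tderiv (u : ℂ → ℝ) (x : ℂ) : ℝ := -x.im * pd u 1 x + x.re * pd u Complex.I x

/-- Unit-speed parametrization of the unit circle. -/
def bpt (θ : ℝ) : ℂ := Complex.exp ((θ : ℂ) * Complex.I)

/-- Integral over ∂𝔻 with respect to arclength. -/
def bint (f : ℂ → ℝ) : ℝ := ∫ θ in (0:ℝ)..(2 * π), f (bpt θ)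

/-- A solution of the prescribed curvature problem for `(K, h)`. -/
def IsSolution (K h u : ℂ → ℝ) : Prop :=
  ContDiff ℝ 2 u ∧
  (∀ x ∈ unitDisk, -lap u x = 2 * K x * Real.exp (u x)) ∧
  (∀ x ∈ unitCircle, nderiv u x + 2 = 2 * h x * Real.exp (u x / 2))

/-- The auxiliary function Φ = H + √(H² + K). -/
def Phi (K H : ℂ → ℝ) (x : ℂ) : ℝ := H x + Real.sqrt (H x ^ 2 + K x)

/-- `H` is the harmonic extension of `h`, C¹ up to the boundary. -/
def IsHarmExt (h H : ℂ → ℝ) : Prop :=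
  ContDiff ℝ 1 H ∧ ContDiffOn ℝ 2 H unitDisk ∧
  (∀ x ∈ unitDisk, lap H x = 0) ∧ ∀ x ∈ unitCircle, H x = h x

/-- K_ε. -/
def Keps (K : ℂ → ℝ) (ε : ℝ) (x : ℂ) : ℝ := (K x - ε / 2) / (1 + ε)

/-- h_ε. -/
def heps (h : ℂ → ℝ) (ε : ℝ) (x : ℂ) : ℝ := h x / (1 + ε)

/-- K̃_ε. -/
def Ktil (ε : ℝ) : ℝ := -ε / (2 * (1 + ε))

/-- h̃_ε. -/
def htil (ε : ℝ) : ℝ := 1 / (1 + ε)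

/-- A solution of the perturbed problem (P_ε). -/
def IsPerturbedSolution (K h : ℂ → ℝ) (ε : ℝ) (u : ℂ → ℝ) : Prop :=
  ContDiff ℝ 2 u ∧
  (∀ x ∈ unitDisk, -lap u x + 2 * Ktil ε = 2 * Keps K ε x * Real.exp (u x)) ∧
  (∀ x ∈ unitCircle, nderiv u x + 2 * htil ε = 2 * heps h ε x * Real.exp (u x / 2))

/-- The energy functional I. -/
def Ifun (K h u : ℂ → ℝ) : ℝ :=
  (∫ x in unitDisk, ((1/2) * gradSq u x - 2 * K x * Real.exp (u x))) +
  bint (fun x => 2 * u x - 4 * h x * Real.exp (u x / 2))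

/-- The perturbation term T. -/
def Tfun (u : ℂ → ℝ) : ℝ :=
  ∫ x in unitDisk, ((1/2) * gradSq u x + Real.exp (u x) - u x)

/-- The perturbed functional I_ε. -/
def Ieps (K h : ℂ → ℝ) (ε : ℝ) (u : ℂ → ℝ) : ℝ := (Ifun K h u + ε * Tfun u) / (1 + ε)

/-- The bubble for constant curvatures K ≡ −1, geodesic curvature 𝔥, with
φ = 𝔥 + √(𝔥² − 1): u_a(x) = 2 log( 2φ(1−|a|²) / (φ²|1−āx|² − |x−a|²) ). -/
def bubbleNeg (φ : ℝ) (a x : ℂ) : ℝ :=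
  2 * Real.log (2 * φ * (1 - ‖a‖ ^ 2) /
    (φ ^ 2 * ‖1 - (starRingEnd ℂ) a * x‖ ^ 2 - ‖x - a‖ ^ 2))

/-!
Let `T_a x = (x - a) / (1 - ā x)` be the disk automorphism sending `a` to `0`. The bubbles are
pulled back from the radial one along these maps: `e^{u_a / 2} = |T_a'| · (e^{u_0 / 2} ∘ T_a)` with
`e^{u_0 / 2} = 2φ / (φ² - |y|²)`. On the circle `|T_a| = 1` and `|T_a'|` is the Poisson kernel at
`a`, which has mean `1`, so the length is `2π · 2φ / (φ² - 1)`. In the disk `|T_a'|²` is the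
Jacobian of `T_a`, so the area is that of the radial bubble, `4π / (φ² - 1)`. Finally
`φ² - 1 = 2φ √(𝔥² - 1)` and `φ⁻¹ = 𝔥 - √(𝔥² - 1)`.
-/

open scoped ComplexConjugate

section Integrals

variable {F : Type*} [NormedAddCommGroup F] [NormedSpace ℝ F]

theorem det_restrictScalars_toSpanSingleton (c : ℂ) :
    ((ContinuousLinearMap.toSpanSingleton ℂ c).restrictScalars ℝ).det = ‖c‖ ^ 2 := by
  simp [ContinuousLinearMap.det, LinearMap.det_restrictScalars, Algebra.norm_complex_eq,
    Complex.normSq_eq_norm_sq]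

theorem integral_image_eq_integral_norm_deriv_sq_smul {s : Set ℂ} {f f' : ℂ → ℂ}
    (hs : MeasurableSet s) (hf' : ∀ x ∈ s, HasDerivWithinAt f (f' x) s x) (hf : Set.InjOn f s)
    (g : ℂ → F) :
    ∫ y in f '' s, g y = ∫ x in s, ‖f' x‖ ^ 2 • g (f x) := by
  simpa only [det_restrictScalars_toSpanSingleton, abs_pow, abs_norm] using
    integral_image_eq_integral_abs_det_fderiv_smul volume hs
      (fun x hx ↦ (hf' x hx).hasFDerivWithinAt.restrictScalars ℝ) hf g

theorem setIntegral_ball_fun_norm_addHaar {E : Type*} [NormedAddCommGroup E] [NormedSpace ℝ E]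
    [MeasurableSpace E] [BorelSpace E] [FiniteDimensional ℝ E] [Nontrivial E] (μ : Measure E)
    [μ.IsAddHaarMeasure] (f : ℝ → F) (R : ℝ) :
    ∫ x in Metric.ball 0 R, f ‖x‖ ∂μ = Module.finrank ℝ E • μ.real (Metric.ball 0 1) •
      ∫ r in Set.Ioo 0 R, r ^ (Module.finrank ℝ E - 1) • f r := by
  have indicator_ball : (Metric.ball (0 : E) R).indicator (fun x ↦ f ‖x‖) =
      fun x ↦ (Set.Iio R).indicator f ‖x‖ := by
    ext x
    simp [Set.indicator]
  rw [← integral_indicator measurableSet_ball, indicator_ball, integral_fun_norm_addHaar,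
    ← Set.Ioi_inter_Iio, ← setIntegral_indicator measurableSet_Iio]
  simp only [Set.indicator_smul]

theorem setIntegral_ball_fun_norm_complex (f : ℝ → F) {R : ℝ} (hR : 0 ≤ R) :
    ∫ z : ℂ in Metric.ball 0 R, f ‖z‖ = (2 * π) • ∫ r in (0 : ℝ)..R, r • f r := by
  rw [setIntegral_ball_fun_norm_addHaar, intervalIntegral.integral_of_le hR,
    integral_Ioc_eq_integral_Ioo]
  simp [Measure.real, Complex.finrank_real_complex, mul_smul, two_smul]

theorem integral_div_sub_sq_sq {c R : ℝ} (hR : R ^ 2 < c) :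
    ∫ r in (0 : ℝ)..R, r / (c - r ^ 2) ^ 2 = R ^ 2 / (2 * c * (c - R ^ 2)) := by
  have denom_ne_zero : ∀ r ∈ Set.uIcc 0 R, c - r ^ 2 ≠ 0 := fun r hr ↦ by
    have : r ^ 2 ≤ R ^ 2 := sq_le_sq.2 (by simpa using Set.abs_sub_left_of_mem_uIcc hr)
    linarith
  have hasDerivAt_primitive : ∀ r ∈ Set.uIcc 0 R,
      HasDerivAt (fun r ↦ (c - r ^ 2)⁻¹ / 2) (r / (c - r ^ 2) ^ 2) r := fun r hr ↦ by
    have hsub : HasDerivAt (fun r ↦ c - r ^ 2) (-(2 * r)) r := by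
      simpa using (hasDerivAt_pow 2 r).const_sub c
    exact ((hsub.fun_inv (denom_ne_zero r hr)).div_const 2).congr_deriv (by ring)
  have continuousOn_integrand : ContinuousOn (fun r ↦ r / (c - r ^ 2) ^ 2) (Set.uIcc 0 R) :=
    continuousOn_id.div (by fun_prop) fun r hr ↦ pow_ne_zero 2 (denom_ne_zero r hr)
  rw [intervalIntegral.integral_eq_sub_of_hasDerivAt hasDerivAt_primitive
    continuousOn_integrand.intervalIntegrable]
  have hc : c ≠ 0 := (hR.trans_le' (sq_nonneg R)).ne'
  have hcR : c - R ^ 2 ≠ 0 := denom_ne_zero R Set.right_mem_uIcc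
  simp only [zero_pow two_ne_zero, sub_zero]
  field_simp
  ring

theorem circleAverage_poissonKernel {c w : ℂ} {R : ℝ} (hw : w ∈ Metric.ball c R) :
    circleAverage (poissonKernel c w) c R = 1 := by
  have poisson_one := InnerProductSpace.HarmonicOnNhd.circleAverage_poissonKernel_smul
    (f := fun _ : ℂ ↦ (1 : ℝ)) (fun z _ ↦ InnerProductSpace.harmonicAt_const 1) hw
  rwa [show poissonKernel c w • (fun _ : ℂ ↦ (1 : ℝ)) = poissonKernel c w by ext; simp]
    at poisson_one

end Integrals

section DiskMobius

/-- The automorphism of the unit disk that sends `a` to `0`, for `‖a‖ < 1`. -/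
def diskMobius (a x : ℂ) : ℂ := (x - a) / (1 - conj a * x)

variable {a x : ℂ}

theorem norm_one_sub_conj_mul_sq_sub_norm_sub_sq (a x : ℂ) :
    ‖1 - conj a * x‖ ^ 2 - ‖x - a‖ ^ 2 = (1 - ‖a‖ ^ 2) * (1 - ‖x‖ ^ 2) := by
  simp only [← Complex.normSq_eq_norm_sq, Complex.normSq_apply, Complex.sub_re, Complex.sub_im,
    Complex.mul_re, Complex.mul_im, Complex.conj_re, Complex.conj_im, Complex.one_re,
    Complex.one_im]
  ring

theorem one_sub_conj_mul_ne_zero (ha : ‖a‖ < 1) (hx : ‖x‖ ≤ 1) : 1 - conj a * x ≠ 0 := by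
  refine sub_ne_zero.2 fun h ↦ ?_
  have norm_mul_lt_one : ‖conj a * x‖ < 1 := by
    rw [norm_mul, RCLike.norm_conj]
    exact mul_lt_one_of_nonneg_of_lt_one_left (norm_nonneg a) ha hx
  simp [← h] at norm_mul_lt_one

theorem hasDerivAt_diskMobius (hx : 1 - conj a * x ≠ 0) :
    HasDerivAt (diskMobius a) ((1 - conj a * a) / (1 - conj a * x) ^ 2) x := by
  have hasDerivAt_denom : HasDerivAt (fun x ↦ 1 - conj a * x) (-conj a) x := by
    simpa using ((hasDerivAt_id x).const_mul (conj a)).const_sub 1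
  exact (((hasDerivAt_id x).sub_const a).fun_div hasDerivAt_denom hx).congr_deriv
    (by simp only [id]; ring)

theorem norm_deriv_diskMobius (ha : ‖a‖ < 1) (hx : ‖x‖ ≤ 1) :
    ‖deriv (diskMobius a) x‖ = (1 - ‖a‖ ^ 2) / ‖1 - conj a * x‖ ^ 2 := by
  have one_sub_norm_sq_nonneg : 0 ≤ 1 - ‖a‖ ^ 2 :=
    sub_nonneg.2 (pow_le_one₀ (norm_nonneg a) ha.le)
  rw [(hasDerivAt_diskMobius (one_sub_conj_mul_ne_zero ha hx)).deriv, norm_div, norm_pow,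
    Complex.conj_mul', ← abs_of_nonneg one_sub_norm_sq_nonneg, ← Real.norm_eq_abs,
    ← Complex.norm_real]
  norm_cast

theorem one_sub_norm_diskMobius_sq (ha : ‖a‖ < 1) (hx : ‖x‖ ≤ 1) :
    1 - ‖diskMobius a x‖ ^ 2 = ‖deriv (diskMobius a) x‖ * (1 - ‖x‖ ^ 2) := by
  have denom_ne_zero := norm_ne_zero_iff.2 (one_sub_conj_mul_ne_zero ha hx)
  rw [norm_deriv_diskMobius ha hx, diskMobius, norm_div, div_mul_eq_mul_div,
    ← norm_one_sub_conj_mul_sq_sub_norm_sub_sq, div_pow, sub_div,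
    div_self (pow_ne_zero 2 denom_ne_zero)]

theorem norm_deriv_diskMobius_pos (ha : ‖a‖ < 1) (hx : ‖x‖ ≤ 1) :
    0 < ‖deriv (diskMobius a) x‖ := by
  rw [norm_deriv_diskMobius ha hx]
  exact div_pos (sub_pos.2 (pow_lt_one₀ (norm_nonneg a) ha two_ne_zero))
    (pow_pos (norm_pos_iff.2 (one_sub_conj_mul_ne_zero ha hx)) 2)

theorem norm_diskMobius_le_one (ha : ‖a‖ < 1) (hx : ‖x‖ ≤ 1) : ‖diskMobius a x‖ ≤ 1 := by
  rw [← sq_le_one_iff₀ (norm_nonneg _), ← sub_nonneg, one_sub_norm_diskMobius_sq ha hx]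
  exact mul_nonneg (norm_nonneg _) (sub_nonneg.2 (pow_le_one₀ (norm_nonneg x) hx))

theorem norm_diskMobius_lt_one (ha : ‖a‖ < 1) (hx : ‖x‖ < 1) : ‖diskMobius a x‖ < 1 := by
  rw [← sq_lt_one_iff₀ (norm_nonneg _), ← sub_pos, one_sub_norm_diskMobius_sq ha hx.le]
  exact mul_pos (norm_deriv_diskMobius_pos ha hx.le)
    (sub_pos.2 (pow_lt_one₀ (norm_nonneg x) hx two_ne_zero))

theorem norm_diskMobius_eq_one (ha : ‖a‖ < 1) (hx : ‖x‖ = 1) : ‖diskMobius a x‖ = 1 := by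
  rw [← pow_eq_one_iff_of_nonneg (norm_nonneg _) two_ne_zero, eq_comm, ← sub_eq_zero,
    one_sub_norm_diskMobius_sq ha hx.le, hx]
  norm_num

theorem norm_deriv_diskMobius_eq_poissonKernel (ha : ‖a‖ < 1) (hx : ‖x‖ = 1) :
    ‖deriv (diskMobius a) x‖ = poissonKernel 0 a x := by
  have norm_denom_sq : ‖1 - conj a * x‖ ^ 2 = ‖x - a‖ ^ 2 := by
    rw [← sub_eq_zero, norm_one_sub_conj_mul_sq_sub_norm_sub_sq, hx]
    norm_num
  simp [norm_deriv_diskMobius ha hx.le, norm_denom_sq, poissonKernel_def, hx]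

theorem diskMobius_neg_diskMobius (ha : ‖a‖ < 1) (hx : ‖x‖ ≤ 1) :
    diskMobius (-a) (diskMobius a x) = x := by
  have denom_ne_zero := one_sub_conj_mul_ne_zero ha hx
  have one_sub_conj_mul_self_ne_zero := one_sub_conj_mul_ne_zero ha ha.le
  have numer_eq : diskMobius a x + a = x * (1 - conj a * a) / (1 - conj a * x) := by
    rw [diskMobius, div_add' _ _ _ denom_ne_zero]
    ring
  have denom_eq : 1 + conj a * diskMobius a x = (1 - conj a * a) / (1 - conj a * x) := by
    rw [diskMobius, ← mul_div_assoc, add_div' _ _ _ denom_ne_zero]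
    ring
  calc diskMobius (-a) (diskMobius a x)
      = (diskMobius a x + a) / (1 + conj a * diskMobius a x) := by
        simp [diskMobius.eq_1 (-a)]
    _ = x := by
        rw [numer_eq, denom_eq, div_div_div_cancel_right₀ denom_ne_zero,
          mul_div_cancel_right₀ _ one_sub_conj_mul_self_ne_zero]

theorem bijOn_diskMobius_ball (ha : ‖a‖ < 1) :
    Set.BijOn (diskMobius a) (Metric.ball 0 1) (Metric.ball 0 1) := by
  have neg_lt_one : ‖-a‖ < 1 := by rwa [norm_neg]
  refine Set.InvOn.bijOn (f' := diskMobius (-a)) ⟨fun x hx ↦ ?_, fun x hx ↦ ?_⟩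
    (fun x hx ↦ ?_) (fun x hx ↦ ?_) <;> rw [mem_ball_zero_iff] at *
  · exact diskMobius_neg_diskMobius ha hx.le
  · simpa using diskMobius_neg_diskMobius neg_lt_one hx.le
  · exact norm_diskMobius_lt_one ha hx
  · exact norm_diskMobius_lt_one neg_lt_one hx

theorem setIntegral_ball_norm_deriv_diskMobius_sq_smul {F : Type*} [NormedAddCommGroup F]
    [NormedSpace ℝ F] (ha : ‖a‖ < 1) (g : ℂ → F) :
    ∫ x in Metric.ball 0 1, ‖deriv (diskMobius a) x‖ ^ 2 • g (diskMobius a x) =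
      ∫ y in Metric.ball 0 1, g y := by
  have hasDerivWithinAt : ∀ x ∈ Metric.ball (0 : ℂ) 1,
      HasDerivWithinAt (diskMobius a) (deriv (diskMobius a) x) (Metric.ball 0 1) x := fun x hx ↦
    (hasDerivAt_diskMobius (one_sub_conj_mul_ne_zero ha (mem_ball_zero_iff.1 hx).le)
      ).differentiableAt.hasDerivAt.hasDerivWithinAt
  rw [← integral_image_eq_integral_norm_deriv_sq_smul measurableSet_ball hasDerivWithinAt
    (bijOn_diskMobius_ball ha).injOn, (bijOn_diskMobius_ball ha).image_eq]

end DiskMobius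

section Bubble

variable {φ : ℝ} {a x : ℂ}

theorem exp_half_bubbleNeg (hφ : 1 < φ) (ha : ‖a‖ < 1) (hx : ‖x‖ ≤ 1) :
    exp (bubbleNeg φ a x / 2) =
      ‖deriv (diskMobius a) x‖ * (2 * φ / (φ ^ 2 - ‖diskMobius a x‖ ^ 2)) := by
  have denom_ne_zero := norm_ne_zero_iff.2 (one_sub_conj_mul_ne_zero ha hx)
  have pullback : 2 * φ * (1 - ‖a‖ ^ 2) / (φ ^ 2 * ‖1 - conj a * x‖ ^ 2 - ‖x - a‖ ^ 2) =
      ‖deriv (diskMobius a) x‖ * (2 * φ / (φ ^ 2 - ‖diskMobius a x‖ ^ 2)) := by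
    rw [norm_deriv_diskMobius ha hx, diskMobius, norm_div]
    field_simp
  have radial_denom_pos : 0 < φ ^ 2 - ‖diskMobius a x‖ ^ 2 :=
    sub_pos.2 (pow_lt_pow_left₀ ((norm_diskMobius_le_one ha hx).trans_lt hφ) (norm_nonneg _)
      two_ne_zero)
  rw [bubbleNeg, mul_div_cancel_left₀ _ two_ne_zero, pullback, exp_log]
  exact mul_pos (norm_deriv_diskMobius_pos ha hx) (div_pos (by linarith) radial_denom_pos)

theorem bint_eq_two_pi_mul_circleAverage (f : ℂ → ℝ) : bint f = 2 * π * circleAverage f 0 1 := by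
  simp only [bint, bpt, circleAverage, circleMap_zero, Complex.ofReal_one, one_mul, smul_eq_mul]
  rw [mul_inv_cancel_left₀ two_pi_pos.ne']

theorem bint_exp_half_bubbleNeg (hφ : 1 < φ) (ha : ‖a‖ < 1) :
    bint (fun x ↦ exp (bubbleNeg φ a x / 2)) = 4 * π * φ / (φ ^ 2 - 1) := by
  have eqOn_sphere : Set.EqOn (fun x ↦ exp (bubbleNeg φ a x / 2))
      ((2 * φ / (φ ^ 2 - 1)) • poissonKernel 0 a) (Metric.sphere 0 |1|) := fun x hx ↦ by
    have norm_eq_one : ‖x‖ = 1 := by simpa using hx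
    simp only [Pi.smul_apply, smul_eq_mul]
    rw [exp_half_bubbleNeg hφ ha norm_eq_one.le, norm_diskMobius_eq_one ha norm_eq_one,
      norm_deriv_diskMobius_eq_poissonKernel ha norm_eq_one, one_pow, mul_comm]
  rw [bint_eq_two_pi_mul_circleAverage, circleAverage_congr_sphere eqOn_sphere,
    circleAverage_smul, circleAverage_poissonKernel (mem_ball_zero_iff.2 ha), smul_eq_mul]
  ring

theorem setIntegral_ball_radial_bubble (hφ : 1 < φ) :
    ∫ y : ℂ in Metric.ball 0 1, (2 * φ / (φ ^ 2 - ‖y‖ ^ 2)) ^ 2 = 4 * π / (φ ^ 2 - 1) := by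
  have one_lt_sq : (1 : ℝ) ^ 2 < φ ^ 2 := by gcongr
  have integrand_eq : ∀ r : ℝ, r • (2 * φ / (φ ^ 2 - r ^ 2)) ^ 2 =
      4 * φ ^ 2 * (r / (φ ^ 2 - r ^ 2) ^ 2) := fun r ↦ by
    rw [smul_eq_mul, div_pow]
    ring
  rw [setIntegral_ball_fun_norm_complex (fun r ↦ (2 * φ / (φ ^ 2 - r ^ 2)) ^ 2) zero_le_one]
  simp only [integrand_eq, intervalIntegral.integral_const_mul, integral_div_sub_sq_sq one_lt_sq,
    smul_eq_mul]
  have hφ0 : φ ≠ 0 := by linarith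
  field_simp

theorem setIntegral_ball_exp_bubbleNeg (hφ : 1 < φ) (ha : ‖a‖ < 1) :
    ∫ x in Metric.ball 0 1, exp (bubbleNeg φ a x) = 4 * π / (φ ^ 2 - 1) := by
  rw [← setIntegral_ball_radial_bubble hφ, ← setIntegral_ball_norm_deriv_diskMobius_sq_smul ha
    (fun y ↦ (2 * φ / (φ ^ 2 - ‖y‖ ^ 2)) ^ 2)]
  refine setIntegral_congr_fun measurableSet_ball fun x hx ↦ ?_
  calc exp (bubbleNeg φ a x)
      = exp (bubbleNeg φ a x / 2) ^ 2 := by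
        rw [← exp_nat_mul]
        congr 1
        push_cast
        ring
    _ = ‖deriv (diskMobius a) x‖ ^ 2 • (2 * φ / (φ ^ 2 - ‖diskMobius a x‖ ^ 2)) ^ 2 := by
        rw [exp_half_bubbleNeg hφ ha (mem_ball_zero_iff.1 hx).le, mul_pow, smul_eq_mul]

end Bubble

/-- Length and area of the bubbles: both integrals are independent of a. -/
theorem bubble_mass
    (𝔥 : ℝ) (h𝔥 : 1 < 𝔥) (φ : ℝ) (hφ : φ = 𝔥 + Real.sqrt (𝔥 ^ 2 - 1))
    (a : ℂ) (ha : a ∈ unitDisk) :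
    bint (fun x => Real.exp (bubbleNeg φ a x / 2)) = 2 * π / Real.sqrt (𝔥 ^ 2 - 1) ∧
    (∫ x in unitDisk, Real.exp (bubbleNeg φ a x))
      = 2 * π * (𝔥 / Real.sqrt (𝔥 ^ 2 - 1) - 1) := by
  have ha_norm : ‖a‖ < 1 := mem_ball_zero_iff.1 ha
  have sq_sub_one_pos : 0 < 𝔥 ^ 2 - 1 := by nlinarith
  have sqrt_pos : 0 < √(𝔥 ^ 2 - 1) := Real.sqrt_pos.2 sq_sub_one_pos
  have sq_sqrt : √(𝔥 ^ 2 - 1) ^ 2 = 𝔥 ^ 2 - 1 := Real.sq_sqrt sq_sub_one_pos.le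
  have one_lt_φ : 1 < φ := by linarith
  have φ_ne_zero : φ ≠ 0 := by linarith
  have φ_sq_sub_one : φ ^ 2 - 1 = 2 * φ * √(𝔥 ^ 2 - 1) := by
    rw [hφ]
    linear_combination -sq_sqrt
  have φ_mul_conjugate : φ * (𝔥 - √(𝔥 ^ 2 - 1)) = 1 := by
    rw [hφ]
    linear_combination -sq_sqrt
  constructor
  · rw [bint_exp_half_bubbleNeg one_lt_φ ha_norm, φ_sq_sub_one]
    field_simp
    ring
  · rw [unitDisk, setIntegral_ball_exp_bubbleNeg one_lt_φ ha_norm, φ_sq_sub_one]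
    field_simp
    linear_combination -4 * φ_mul_conjugate

end
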